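/- Let Γ ∈ ℝ^{p×p} be a connected interconnection and let r ∈ ℝ^p satisfy rᵀΓ = 0 and rᵀ1 = 1. Then the matrix Γ − 1rᵀ is Hurwitz: every eigenvalue of Γ − 1rᵀ (over ℂ) has strictly negative real part; equivalently, exp(t(Γ − 1rᵀ)) → 0 as t → ∞. -/

import Mathlib

open Matrix Filter Topology

/-- `Γ` is an interconnection: off-diagonal entries are nonnegative and each row sums to zero. -/
def IsInterconnection {p : ℕ} (Γ : Matrix (Fin p) (Fin p) ℝ) : Prop :=
  (∀ i j, i ≠ j → 0 ≤ Γ i j) ∧ ∀ i, ∑ j, Γ i j = 0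

/-- `Γ` is a connected interconnection. -/
def IsConnectedInterconnection {p : ℕ} (Γ : Matrix (Fin p) (Fin p) ℝ) : Prop :=
  IsInterconnection Γ ∧
    ∃ k : Fin p, ∀ i : Fin p, Relation.ReflTransGen (fun a b => 0 < Γ a b) i k

/-!
Since `r` is a left null vector of `Γ`, pairing an eigenvector equation of `Γ - 1rᵀ` with `r` shows
that every eigenvalue is either `-rᵀ1` or an eigenvalue of `Γ`. Gershgorin's discs for `Γ` lie in
the closed left half-plane and touch the imaginary axis only at `0`. The value `0` is excluded: a
null vector `v` of `Γ - 1rᵀ` satisfies `Γv = 0` and `rᵀv = 0`, the maximum principle propagates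
extrema of `v` along edges, so both are attained at the root and `v` is constant, and then
`rᵀv = 0` gives `v = 0`.

For the exponential of `a = Γ - 1rᵀ`, decompose the identity matrix into generalized eigenvectors
`b` of left multiplication by `a`; on each of them `exp(ta)b` is `exp(tμ)` times a polynomial in
`t`, where `μ` is an eigenvalue of `a`.
-/

section Exponential

theorem tendsto_pow_mul_cexp_mul_atTop_nhds_zero {μ : ℂ} (hμ : μ.re < 0) (k : ℕ) :
    Tendsto (fun t : ℝ => (t : ℂ) ^ k * Complex.exp (t * μ)) atTop (𝓝 0) := by
  have h := tendsto_rpow_mul_exp_neg_mul_atTop_nhds_zero k (-μ.re) (neg_pos.mpr hμ)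
  refine tendsto_zero_iff_norm_tendsto_zero.mpr (h.congr' ?_)
  filter_upwards [eventually_ge_atTop 0] with t ht
  simp [Complex.norm_exp, abs_of_nonneg ht, mul_comm]

variable {A : Type*} [NormedRing A]

theorem exp_mul_eq_sum_of_pow_mul_eq_zero {𝕜 : Type*} [RCLike 𝕜] [NormedAlgebra 𝕜 A]
    [CompleteSpace A] {a b : A} {k : ℕ} (h : a ^ k * b = 0) :
    NormedSpace.exp a * b = ∑ i ∈ Finset.range k, (i.factorial⁻¹ : 𝕜) • (a ^ i * b) := by
  have hterm : ∀ i ∉ Finset.range k, (i.factorial⁻¹ : 𝕜) • (a ^ i * b) = 0 := fun i hi => by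
    rw [← Nat.sub_add_cancel (not_lt.mp (Finset.mem_range.not.mp hi)), pow_add, mul_assoc, h,
      mul_zero, smul_zero]
  have hsum : HasSum (fun i : ℕ => (i.factorial⁻¹ : 𝕜) • (a ^ i * b)) (NormedSpace.exp a * b) := by
    simpa only [smul_mul_assoc] using (NormedSpace.exp_series_hasSum_exp' (𝕂 := 𝕜) a).mul_right b
  exact hsum.unique (hasSum_sum_of_ne_finset_zero hterm)

variable [NormedAlgebra ℂ A]

theorem exp_smul_mul_eq_sum_of_sub_pow_mul_eq_zero [CompleteSpace A] {a b : A} {μ : ℂ} {k : ℕ}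
    (h : (a - algebraMap ℂ A μ) ^ k * b = 0) (z : ℂ) :
    NormedSpace.exp (z • a) * b = ∑ i ∈ Finset.range k,
      (z ^ i * Complex.exp (z * μ)) •
        ((i.factorial⁻¹ : ℂ) • ((a - algebraMap ℂ A μ) ^ i * b)) := by
  let : NormedAlgebra ℚ A := NormedAlgebra.restrictScalars ℚ ℂ A
  set N := a - algebraMap ℂ A μ with hN
  have hsplit : z • a = algebraMap ℂ A (z * μ) + z • N := by
    simp [hN, smul_sub, Algebra.algebraMap_eq_smul_one, mul_smul]
  have hpow : (z • N) ^ k * b = 0 := by rw [smul_pow, smul_mul_assoc, h, smul_zero]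
  rw [hsplit, NormedSpace.exp_add_of_commute (Algebra.commutes (z * μ) (z • N)),
    ← NormedSpace.algebraMap_exp_comm, mul_assoc, ← Algebra.smul_def, ← Complex.exp_eq_exp_ℂ,
    exp_mul_eq_sum_of_pow_mul_eq_zero (𝕜 := ℂ) hpow, Finset.smul_sum]
  refine Finset.sum_congr rfl fun i _ => ?_
  rw [smul_pow, smul_mul_assoc, smul_smul, smul_smul, smul_smul]
  congr 1
  ring

theorem tendsto_exp_smul_mul_of_sub_pow_mul_eq_zero [CompleteSpace A] {a b : A} {μ : ℂ}
    (hμ : μ.re < 0) {k : ℕ} (h : (a - algebraMap ℂ A μ) ^ k * b = 0) :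
    Tendsto (fun t : ℝ => NormedSpace.exp ((t : ℂ) • a) * b) atTop (𝓝 0) := by
  simp_rw [exp_smul_mul_eq_sum_of_sub_pow_mul_eq_zero h]
  rw [← Finset.sum_const_zero (s := Finset.range k)]
  refine tendsto_finsetSum _ fun i _ => ?_
  simpa using (tendsto_pow_mul_cexp_mul_atTop_nhds_zero hμ i).smul_const
    ((i.factorial⁻¹ : ℂ) • ((a - algebraMap ℂ A μ) ^ i * b))

theorem tendsto_exp_smul_of_forall_mem_spectrum_re_neg [FiniteDimensional ℂ A] {a : A}
    (ha : ∀ μ ∈ spectrum ℂ a, μ.re < 0) :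
    Tendsto (fun t : ℝ => NormedSpace.exp ((t : ℂ) • a)) atTop (𝓝 0) := by
  have : CompleteSpace A := FiniteDimensional.complete ℂ A
  suffices ∀ b : A, Tendsto (fun t : ℝ => NormedSpace.exp ((t : ℂ) • a) * b) atTop (𝓝 0) by
    simpa only [mul_one] using this 1
  intro b
  have hb : b ∈ ⨆ μ, Module.End.maxGenEigenspace (LinearMap.mulLeft ℂ a) μ := by
    rw [Module.End.iSup_maxGenEigenspace_eq_top]
    exact Submodule.mem_top
  induction hb using Submodule.iSup_induction' with
  | zero => simp
  | add b c _ _ hb hc => simpa only [mul_add, add_zero] using hb.add hc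
  | mem μ b hb =>
    obtain ⟨k, hk⟩ := (Module.End.mem_maxGenEigenspace _ _ _).mp hb
    have hmulLeft : LinearMap.mulLeft ℂ a - μ • 1 = LinearMap.mulLeft ℂ (a - algebraMap ℂ A μ) := by
      ext x
      simp [sub_mul, Algebra.smul_def]
    rw [hmulLeft, LinearMap.pow_mulLeft, LinearMap.mulLeft_apply] at hk
    by_cases hμ : μ ∈ spectrum ℂ a
    · exact tendsto_exp_smul_mul_of_sub_pow_mul_eq_zero (ha μ hμ) hk
    · have hunit : IsUnit (a - algebraMap ℂ A μ) :=
        IsUnit.sub_iff.mp (spectrum.notMem_iff.mp hμ)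
      simp [(hunit.pow k).mul_right_eq_zero.mp hk]

end Exponential

section Matrix

variable {n : Type*} [Fintype n]

open scoped Matrix.Norms.Operator in
theorem matrix_map_exp [DecidableEq n] {R S : Type*} [NormedRing R] [NormedAlgebra ℚ R]
    [CompleteSpace R] [NormedRing S] [Algebra ℚ S] {f : R →+* S} (hf : Continuous f)
    (M : Matrix n n R) : (NormedSpace.exp M).map f = NormedSpace.exp (M.map f) := by
  -- Instance search does not see that the operator norm induces the product uniformity.
  have : @CompleteSpace (Matrix n n R) PseudoMetricSpace.toUniformSpace :=
    Matrix.instCompleteSpace n n R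
  exact NormedSpace.map_exp (f.mapMatrix (m := n)) (continuous_id.matrix_map hf) M

theorem tendsto_exp_smul_of_forall_mem_spectrum_map_ofReal_re_neg [DecidableEq n]
    {M : Matrix n n ℝ} (hM : ∀ μ ∈ spectrum ℂ (M.map Complex.ofReal), μ.re < 0) :
    Tendsto (fun t : ℝ => NormedSpace.exp (t • M)) atTop (𝓝 0) := by
  have hexp : ∀ t : ℝ, NormedSpace.exp ((t : ℂ) • M.map Complex.ofReal) =
      (NormedSpace.exp (t • M)).map Complex.ofReal := fun t => by
    rw [← Matrix.map_smul' _ _ _ Complex.ofReal_mul]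
    exact (matrix_map_exp (f := Complex.ofRealHom) Complex.continuous_ofReal (t • M)).symm
  have hcomplex : Tendsto (fun t : ℝ => NormedSpace.exp ((t : ℂ) • M.map Complex.ofReal))
      atTop (𝓝 0) :=
    open scoped Matrix.Norms.Operator in tendsto_exp_smul_of_forall_mem_spectrum_re_neg hM
  simp_rw [hexp] at hcomplex
  refine tendsto_pi_nhds.mpr fun i => tendsto_pi_nhds.mpr fun j => ?_
  exact Filter.tendsto_ofReal_iff.mp (tendsto_pi_nhds.mp (tendsto_pi_nhds.mp hcomplex i) j)

theorem eq_sub_dotProduct_or_mulVec_eq_smul_of_sub_vecMulVec {R : Type*} [CommRing R] [IsDomain R]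
    {M : Matrix n n R} {r u v : n → R} {c μ : R} (hr : r ᵥ* M = c • r)
    (hv : (M - vecMulVec u r) *ᵥ v = μ • v) :
    μ = c - r ⬝ᵥ u ∨ r ⬝ᵥ v = 0 ∧ M *ᵥ v = μ • v := by
  have hpair : (c - r ⬝ᵥ u) * (r ⬝ᵥ v) = μ * (r ⬝ᵥ v) := by
    have := congrArg (r ⬝ᵥ ·) hv
    simpa [dotProduct_mulVec, vecMul_sub, hr, vecMul_vecMulVec, sub_dotProduct, sub_mul] using this
  refine (mul_eq_mul_right_iff.mp hpair).imp Eq.symm fun hrv => ⟨hrv, ?_⟩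
  simpa [sub_mulVec, vecMulVec_mulVec, hrv] using hv

theorem mem_spectrum_iff_exists_mulVec_eq_smul [DecidableEq n] {K : Type*} [Field K]
    {M : Matrix n n K} {μ : K} : μ ∈ spectrum K M ↔ ∃ v ≠ 0, M *ᵥ v = μ • v := by
  rw [← spectrum_toLin', ← Module.End.hasEigenvalue_iff_mem_spectrum]
  simp [Module.End.hasEigenvalue_iff, Submodule.ne_bot_iff, and_comm]

theorem eq_sub_dotProduct_or_mem_spectrum_of_sub_vecMulVec [DecidableEq n] {K : Type*} [Field K]
    {M : Matrix n n K} {r u : n → K} {c μ : K} (hr : r ᵥ* M = c • r)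
    (hμ : μ ∈ spectrum K (M - vecMulVec u r)) :
    μ = c - r ⬝ᵥ u ∨ μ ∈ spectrum K M := by
  obtain ⟨v, hv, hvμ⟩ := mem_spectrum_iff_exists_mulVec_eq_smul.mp hμ
  exact (eq_sub_dotProduct_or_mulVec_eq_smul_of_sub_vecMulVec hr hvμ).imp_right fun h =>
    mem_spectrum_iff_exists_mulVec_eq_smul.mpr ⟨v, hv, h.2⟩

theorem eq_map_sub_dotProduct_or_mem_spectrum_map_of_sub_vecMulVec [DecidableEq n]
    {R K : Type*} [CommRing R] [Field K] (f : R →+* K) {M : Matrix n n R} {r u : n → R} {c : R}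
    {μ : K}
    (hr : r ᵥ* M = c • r) (hμ : μ ∈ spectrum K ((M - vecMulVec u r).map f)) :
    μ = f (c - r ⬝ᵥ u) ∨ μ ∈ spectrum K (M.map f) := by
  have hmap : (M - vecMulVec u r).map f = M.map f - vecMulVec (f ∘ u) (f ∘ r) := by
    ext i j
    simp [vecMulVec_apply]
  have hrf : (f ∘ r) ᵥ* M.map f = f c • (f ∘ r) := by
    ext j
    simp [← f.map_vecMul, hr]
  rw [f.map_sub, f.map_dotProduct]
  exact eq_sub_dotProduct_or_mem_spectrum_of_sub_vecMulVec hrf (hmap ▸ hμ)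

theorem re_neg_or_eq_zero_of_norm_add_ofReal_le {z : ℂ} {d : ℝ} (h : ‖z + d‖ ≤ d) :
    z.re < 0 ∨ z = 0 := by
  refine or_iff_not_imp_left.mpr fun hre => ?_
  have hd : 0 ≤ d := (norm_nonneg _).trans h
  have hsq : (z.re + d) ^ 2 + z.im ^ 2 ≤ d ^ 2 := by
    have := pow_le_pow_left₀ (norm_nonneg _) h 2
    simpa [Complex.sq_norm, Complex.normSq_apply, ← sq] using this
  have hnormSq : Complex.normSq z ≤ 0 := by
    rw [Complex.normSq_apply]
    linarith [mul_nonneg (not_lt.mp hre) hd]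
  exact Complex.normSq_eq_zero.mp (hnormSq.antisymm (Complex.normSq_nonneg z))

theorem re_neg_or_eq_zero_of_mem_spectrum_map_ofReal [DecidableEq n] {Γ : Matrix n n ℝ}
    (hoff : ∀ i j, i ≠ j → 0 ≤ Γ i j) (hrow : ∀ i, ∑ j, Γ i j ≤ 0) {μ : ℂ}
    (hμ : μ ∈ spectrum ℂ (Γ.map Complex.ofReal)) : μ.re < 0 ∨ μ = 0 := by
  rw [← spectrum_toLin', ← Module.End.hasEigenvalue_iff_mem_spectrum] at hμ
  obtain ⟨k, hk⟩ := eigenvalue_mem_ball hμ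
  refine re_neg_or_eq_zero_of_norm_add_ofReal_le (d := -Γ k k) ?_
  calc ‖μ + (-Γ k k : ℝ)‖ = ‖μ - Γ k k‖ := by rw [Complex.ofReal_neg, sub_eq_add_neg]
    _ ≤ ∑ j ∈ Finset.univ.erase k, ‖(Γ k j : ℂ)‖ := mem_closedBall_iff_norm.mp hk
    _ = ∑ j ∈ Finset.univ.erase k, Γ k j := Finset.sum_congr rfl fun j hj => by
      rw [Complex.norm_real, Real.norm_of_nonneg (hoff k j (Finset.ne_of_mem_erase hj).symm)]
    _ ≤ -Γ k k := by
      linarith [hrow k, Finset.add_sum_erase _ (Γ k) (Finset.mem_univ k)]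

section MaximumPrinciple

variable {R : Type*} [CommRing R] [LinearOrder R] [IsStrictOrderedRing R] {Γ : Matrix n n R}

theorem apply_eq_of_reflTransGen_of_forall_le (hoff : ∀ i j, i ≠ j → 0 ≤ Γ i j)
    (hrow : ∀ i, ∑ j, Γ i j = 0) {w : n → R} (hw : 0 ≤ Γ *ᵥ w) {m i : n}
    (hmax : ∀ j, w j ≤ w m) (hmi : Relation.ReflTransGen (fun a b => 0 < Γ a b) m i) :
    w i = w m := by
  induction hmi with
  | refl => rfl
  | @tail b c _ hbc hb =>
    have hnonneg : ∀ j ∈ Finset.univ, 0 ≤ Γ b j * (w m - w j) := fun j _ => by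
      obtain rfl | hbj := eq_or_ne b j
      · simp [hb]
      · exact mul_nonneg (hoff b j hbj) (sub_nonneg.mpr (hmax j))
    have hsum : ∑ j, Γ b j * (w m - w j) ≤ 0 := by
      have hwb : 0 ≤ ∑ j, Γ b j * w j := hw b
      simpa [mul_sub, ← Finset.sum_mul, hrow] using hwb
    have hzero := (Finset.sum_eq_zero_iff_of_nonneg hnonneg).mp
      (hsum.antisymm (Finset.sum_nonneg hnonneg)) c (Finset.mem_univ c)
    exact (sub_eq_zero.mp ((mul_eq_zero.mp hzero).resolve_left hbc.ne')).symm

theorem apply_le_of_forall_reflTransGen (hoff : ∀ i j, i ≠ j → 0 ≤ Γ i j)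
    (hrow : ∀ i, ∑ j, Γ i j = 0) {k : n}
    (hk : ∀ i, Relation.ReflTransGen (fun a b => 0 < Γ a b) i k) {w : n → R}
    (hw : 0 ≤ Γ *ᵥ w) (i : n) : w i ≤ w k := by
  have : Nonempty n := ⟨k⟩
  obtain ⟨m, hm⟩ := Finite.exists_max w
  exact apply_eq_of_reflTransGen_of_forall_le hoff hrow hw hm (hk m) ▸ hm i

theorem apply_eq_of_mulVec_eq_zero (hoff : ∀ i j, i ≠ j → 0 ≤ Γ i j)
    (hrow : ∀ i, ∑ j, Γ i j = 0) {k : n}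
    (hk : ∀ i, Relation.ReflTransGen (fun a b => 0 < Γ a b) i k) {w : n → R}
    (hw : Γ *ᵥ w = 0) (i : n) : w i = w k := by
  refine (apply_le_of_forall_reflTransGen hoff hrow hk hw.ge i).antisymm (neg_le_neg_iff.mp ?_)
  exact apply_le_of_forall_reflTransGen (w := -w) hoff hrow hk (by simp [mulVec_neg, hw]) i

end MaximumPrinciple

theorem isUnit_sub_vecMulVec_one [DecidableEq n] {K : Type*} [Field K] [LinearOrder K]
    [IsStrictOrderedRing K] {Γ : Matrix n n K}
    (hoff : ∀ i j, i ≠ j → 0 ≤ Γ i j) (hrow : ∀ i, ∑ j, Γ i j = 0) {k : n}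
    (hk : ∀ i, Relation.ReflTransGen (fun a b => 0 < Γ a b) i k) {r : n → K}
    (hr : r ᵥ* Γ = 0) (hr1 : ∑ i, r i ≠ 0) : IsUnit (Γ - vecMulVec 1 r) := by
  suffices ∀ v, (Γ - vecMulVec 1 r) *ᵥ v = 0 → v = 0 from
    mulVec_injective_iff_isUnit.mp ((injective_iff_map_eq_zero (mulVecLin _)).mpr this)
  intro v hv
  obtain hone | ⟨hrv, hΓv⟩ := eq_sub_dotProduct_or_mulVec_eq_smul_of_sub_vecMulVec (c := 0) (μ := 0)
    (hr.trans (zero_smul K r).symm) (hv.trans (zero_smul K v).symm)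
  · exact absurd (by simpa [dotProduct_one] using hone) hr1
  · rw [zero_smul] at hΓv
    have hconst : ∀ i, v i = v k := apply_eq_of_mulVec_eq_zero hoff hrow hk hΓv
    have hvk : v k = 0 := by
      simpa [dotProduct, hconst, ← Finset.sum_mul, hr1] using hrv
    exact funext fun i => (hconst i).trans hvk

end Matrix

theorem gamma_sub_one_rT_hurwitz_general {n : Type*} [Fintype n] [DecidableEq n]
    {Γ : Matrix n n ℝ} (hoff : ∀ i j, i ≠ j → 0 ≤ Γ i j) (hrow : ∀ i, ∑ j, Γ i j = 0) {k : n}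
    (hk : ∀ i, Relation.ReflTransGen (fun a b => 0 < Γ a b) i k) {r : n → ℝ}
    (hr : r ᵥ* Γ = 0) (hr1 : 0 < ∑ i, r i) :
    (∀ μ ∈ spectrum ℂ ((Γ - vecMulVec 1 r).map Complex.ofReal), μ.re < 0) ∧
      Tendsto (fun t : ℝ => NormedSpace.exp (t • (Γ - vecMulVec 1 r))) atTop (𝓝 0) := by
  suffices hre : ∀ μ ∈ spectrum ℂ ((Γ - vecMulVec 1 r).map Complex.ofReal), μ.re < 0 from
    ⟨hre, tendsto_exp_smul_of_forall_mem_spectrum_map_ofReal_re_neg hre⟩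
  intro μ hμ
  have hμ0 : μ ≠ 0 := by
    rintro rfl
    have hunit := isUnit_sub_vecMulVec_one hoff hrow hk hr hr1.ne'
    exact spectrum.zero_notMem ℂ (hunit.map Complex.ofRealHom.mapMatrix) hμ
  obtain rfl | hμΓ := eq_map_sub_dotProduct_or_mem_spectrum_map_of_sub_vecMulVec Complex.ofRealHom
    (hr.trans (zero_smul ℝ r).symm) hμ
  · simpa [dotProduct_one] using hr1
  · have hleft := re_neg_or_eq_zero_of_mem_spectrum_map_ofReal hoff (fun i => (hrow i).le) hμΓ
    exact hleft.resolve_right hμ0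

/-- For a connected interconnection `Γ` with `rᵀΓ = 0`, `rᵀ1 = 1`, the matrix `Γ - 1rᵀ`
is Hurwitz: every eigenvalue over `ℂ` has strictly negative real part; equivalently,
`exp(t(Γ - 1rᵀ)) → 0` as `t → ∞`. -/
theorem gamma_sub_one_rT_hurwitz
    (p : ℕ) (Γ : Matrix (Fin p) (Fin p) ℝ) (hΓ : IsConnectedInterconnection Γ)
    (r : Fin p → ℝ) (hr : r ᵥ* Γ = 0) (hr1 : ∑ i, r i = 1) :
    (∀ μ ∈ spectrum ℂ ((Γ - vecMulVec (fun _ => (1 : ℝ)) r).map Complex.ofReal), μ.re < 0) ∧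
    Tendsto (fun t : ℝ =>
        NormedSpace.exp (t • (Γ - vecMulVec (fun _ => (1 : ℝ)) r)))
      atTop (nhds 0) := by
  obtain ⟨⟨hoff, hrow⟩, k, hk⟩ := hΓ
  exact gamma_sub_one_rT_hurwitz_general hoff hrow hk hr (hr1 ▸ one_pos)
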